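/- Let α, β : I_M → Y be paths in a digital image Y ⊆ ℤⁿ with α(0) = β(0) = y₀ and α(M) = β(M) = y_M, let k ≥ 1, and let α̂, β̂ : I_L → S(Y, 2k+1), L = (2k+1)M+2k, be their standard covers. Then α̂(0) = β̂(0) = ȳ₀ and α̂(L) = β̂(L) = ȳ_M, and if α and β are homotopic rel endpoints, then α̂ and β̂ are homotopic rel endpoints. -/

import Mathlib

open Set

/-- Adjacency of points in `ℤⁿ`: all coordinates differ by at most 1. -/
def adj {n : ℕ} (x y : Fin n → ℤ) : Prop := ∀ i, |x i - y i| ≤ 1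

/-- The `k`-subdivision of a digital image `X ⊆ ℤⁿ`. -/
def Subdiv {n : ℕ} (X : Set (Fin n → ℤ)) (k : ℤ) : Set (Fin n → ℤ) :=
  { y | (fun i => (y i).fdiv k) ∈ X }

/-- The standard projection `ρ_k`, coordinatewise floor-division by `k`. -/
def rho {n : ℕ} (k : ℤ) (y : Fin n → ℤ) : Fin n → ℤ := fun i => (y i).fdiv k

/-- The centre `ī = (2k+1)i + k` of `S(i, 2k+1) ⊆ ℤ`. -/
def bar (k i : ℤ) : ℤ := (2 * k + 1) * i + k

/-- The centre `ȳ = (2k+1)y + (k,…,k)` of `S(y, 2k+1) ⊆ ℤⁿ`. -/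
def barPt {n : ℕ} (k : ℤ) (y : Fin n → ℤ) : Fin n → ℤ := fun i => (2 * k + 1) * y i + k

/-- The standard cover `α̂ : I_{(2k+1)N+2k} → ℤⁿ` of a path `α : I_N → Y ⊆ ℤⁿ`,
with respect to the odd subdivision factor `2k+1`:
`α̂(j) = \overline{α(0)}` for `0 ≤ j ≤ k-1`;
`α̂(ī + t) = \overline{α(i)} + t (α(i+1) - α(i))` for `0 ≤ i ≤ N-1`, `0 ≤ t ≤ 2k`
(here `j = ī + t` has `i = (j-k) div (2k+1)` and `t = (j-k) mod (2k+1)`);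
`α̂(j) = \overline{α(N)}` for `(2k+1)N + k ≤ j`. -/
def cover {n : ℕ} (k N : ℤ) (α : ℤ → Fin n → ℤ) (j : ℤ) : Fin n → ℤ :=
  if j ≤ k - 1 then barPt k (α 0)
  else if (2 * k + 1) * N + k ≤ j then barPt k (α N)
  else fun i =>
    barPt k (α ((j - k).fdiv (2 * k + 1))) i
      + ((j - k) % (2 * k + 1)) *
          (α ((j - k).fdiv (2 * k + 1) + 1) i - α ((j - k).fdiv (2 * k + 1)) i)


/-- `HomotopicRel M Y y₀ yM f g`: maps `f, g : I_M → Y` with common endpoints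
`y₀, yM` are homotopic rel endpoints. -/
def HomotopicRel {n : ℕ} (M : ℤ) (Y : Set (Fin n → ℤ)) (y₀ yM : Fin n → ℤ)
    (f g : ℤ → Fin n → ℤ) : Prop :=
  ∃ N : ℤ, 1 ≤ N ∧ ∃ H : ℤ → ℤ → Fin n → ℤ,
    (∀ x ∈ Icc (0 : ℤ) M, ∀ t ∈ Icc (0 : ℤ) N, H x t ∈ Y) ∧
    (∀ x ∈ Icc (0 : ℤ) M, ∀ t ∈ Icc (0 : ℤ) N,
      ∀ x' ∈ Icc (0 : ℤ) M, ∀ t' ∈ Icc (0 : ℤ) N,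
      |x - x'| ≤ 1 → |t - t'| ≤ 1 → adj (H x t) (H x' t')) ∧
    (∀ x ∈ Icc (0 : ℤ) M, H x 0 = f x) ∧
    (∀ x ∈ Icc (0 : ℤ) M, H x N = g x) ∧
    (∀ t ∈ Icc (0 : ℤ) N, H 0 t = y₀) ∧
    (∀ t ∈ Icc (0 : ℤ) N, H M t = yM)

/-- The interpolation on a square, with corner values in `{0,1}`. -/
def psi (K a b c d t u : ℤ) : ℤ :=
  max (max (max (a * min (K - t) (K - u)) (b * min t (K - u)))
        (max (c * min (K - t) u) (d * min t u)))
    (max (max (min a b * (K - u)) (min c d * u)) (max (min a c * (K - t)) (min b d * t)))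

def mn (a b c d : ℤ) : ℤ := min (min a b) (min c d)

/-- The interpolation on a square with pairwise adjacent corner values. -/
def phi (K a b c d t u : ℤ) : ℤ :=
  K * mn a b c d +
    psi K (a - mn a b c d) (b - mn a b c d) (c - mn a b c d) (d - mn a b c d) t u

/-- Pairwise adjacent quadruples. -/
def Quad (a b c d : ℤ) : Prop :=
  |a - b| ≤ 1 ∧ |a - c| ≤ 1 ∧ |a - d| ≤ 1 ∧ |b - c| ≤ 1 ∧ |b - d| ≤ 1 ∧ |c - d| ≤ 1

theorem Quad.cases {a b c d : ℤ} (h : Quad a b c d) :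
    (a - mn a b c d = 0 ∨ a - mn a b c d = 1) ∧ (b - mn a b c d = 0 ∨ b - mn a b c d = 1) ∧
    (c - mn a b c d = 0 ∨ c - mn a b c d = 1) ∧ (d - mn a b c d = 0 ∨ d - mn a b c d = 1) := by
  obtain ⟨h1, h2, h3, h4, h5, h6⟩ := h
  rw [abs_le] at *
  unfold mn
  omega

theorem lip_max {a a' b b' e : ℤ} (h : |a - a'| ≤ e) (h' : |b - b'| ≤ e) :
    |max a b - max a' b'| ≤ e := by
  rw [abs_le] at *; omega

theorem lip_min {a a' b b' e : ℤ} (h : |a - a'| ≤ e) (h' : |b - b'| ≤ e) :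
    |min a b - min a' b'| ≤ e := by
  rw [abs_le] at *; omega

theorem lip_mul {p a a' e : ℤ} (hp : p = 0 ∨ p = 1) (h : |a - a'| ≤ e) :
    |p * a - p * a'| ≤ e := by
  rcases hp with rfl | rfl
  · simpa using (abs_nonneg _).trans h
  · simpa using h

theorem min01 {p q : ℤ} (hp : p = 0 ∨ p = 1) (hq : q = 0 ∨ q = 1) :
    min p q = 0 ∨ min p q = 1 := by omega

theorem psi_lip {K a b c d t u t' u' e : ℤ} (ha : a = 0 ∨ a = 1) (hb : b = 0 ∨ b = 1)
    (hc : c = 0 ∨ c = 1) (hd : d = 0 ∨ d = 1) (ht : |t - t'| ≤ e) (hu : |u - u'| ≤ e) :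
    |psi K a b c d t u - psi K a b c d t' u'| ≤ e := by
  have ht' : |(K - t) - (K - t')| ≤ e := by rw [abs_le] at *; omega
  have hu' : |(K - u) - (K - u')| ≤ e := by rw [abs_le] at *; omega
  unfold psi
  exact lip_max
    (lip_max (lip_max (lip_mul ha (lip_min ht' hu')) (lip_mul hb (lip_min ht hu')))
      (lip_max (lip_mul hc (lip_min ht' hu)) (lip_mul hd (lip_min ht hu))))
    (lip_max (lip_max (lip_mul (min01 ha hb) hu') (lip_mul (min01 hc hd) hu))
      (lip_max (lip_mul (min01 ha hc) ht') (lip_mul (min01 hb hd) ht)))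

theorem phi_lip {K a b c d t u t' u' e : ℤ} (h : Quad a b c d)
    (ht : |t - t'| ≤ e) (hu : |u - u'| ≤ e) :
    |phi K a b c d t u - phi K a b c d t' u'| ≤ e := by
  obtain ⟨h1, h2, h3, h4⟩ := h.cases
  have := psi_lip (K := K) h1 h2 h3 h4 ht hu
  unfold phi
  rwa [add_sub_add_left_eq_sub]

theorem phi_bot {K a b c d t : ℤ} (h : Quad a b c d) (h0 : 0 ≤ t) (h1 : t ≤ K) :
    phi K a b c d t 0 = a * (K - t) + b * t := by
  obtain ⟨ha, hb, hc, hd⟩ := h.cases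
  unfold phi
  generalize mn a b c d = m at *
  have key : psi K (a - m) (b - m) (c - m) (d - m) t 0 = (a - m) * (K - t) + (b - m) * t := by
    unfold psi
    rcases ha with ha | ha <;> rcases hb with hb | hb <;> rcases hc with hc | hc <;>
      rcases hd with hd | hd <;> rw [ha, hb, hc, hd] <;>
      simp only [zero_mul, one_mul, min_self, mul_zero, sub_zero] <;> norm_num <;> omega
  rw [key]; ring

theorem phi_top {K a b c d t : ℤ} (h : Quad a b c d) (h0 : 0 ≤ t) (h1 : t ≤ K) :
    phi K a b c d t K = c * (K - t) + d * t := by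
  obtain ⟨ha, hb, hc, hd⟩ := h.cases
  unfold phi
  generalize mn a b c d = m at *
  have key : psi K (a - m) (b - m) (c - m) (d - m) t K = (c - m) * (K - t) + (d - m) * t := by
    unfold psi
    rcases ha with ha | ha <;> rcases hb with hb | hb <;> rcases hc with hc | hc <;>
      rcases hd with hd | hd <;> rw [ha, hb, hc, hd] <;>
      simp only [zero_mul, one_mul, min_self, mul_zero, sub_zero] <;> norm_num <;> omega
  rw [key]; ring

theorem phi_swap (K a b c d t u : ℤ) : phi K a b c d t u = phi K a c b d u t := by
  have hm : mn a b c d = mn a c b d := by unfold mn; omega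
  unfold phi
  rw [hm]
  generalize mn a c b d = m
  congr 1
  unfold psi
  rw [min_comm (K - t), min_comm t (K - u), min_comm (K - t) u, min_comm t u]
  congr 1
  · rw [max_assoc, max_assoc, max_left_comm ((b - m) * _)]
  · rw [max_comm]

theorem Quad.swap {a b c d : ℤ} (h : Quad a b c d) : Quad a c b d := by
  obtain ⟨h1, h2, h3, h4, h5, h6⟩ := h
  exact ⟨h2, h1, h3, by rwa [abs_sub_comm], h6, h5⟩

theorem phi_left {K a b c d u : ℤ} (h : Quad a b c d) (h0 : 0 ≤ u) (h1 : u ≤ K) :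
    phi K a b c d 0 u = a * (K - u) + c * u := by
  rw [phi_swap, phi_bot h.swap h0 h1]

theorem phi_right {K a b c d u : ℤ} (h : Quad a b c d) (h0 : 0 ≤ u) (h1 : u ≤ K) :
    phi K a b c d K u = b * (K - u) + d * u := by
  rw [phi_swap, phi_top h.swap h0 h1]

theorem phi_const (K a t u : ℤ) : phi K a a a a t u = K * a := by
  simp [phi, psi, mn]

/-- Global interpolation of `h : ℤ × ℤ → ℤ` at `(x, s)`. -/
def Phi (K : ℤ) (h : ℤ → ℤ → ℤ) (x s : ℤ) : ℤ :=
  phi K (h (x / K) (s / K)) (h (x / K + 1) (s / K)) (h (x / K) (s / K + 1))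
    (h (x / K + 1) (s / K + 1)) (x % K) (s % K)

/-- Discrete continuity of a function on the plane. -/
def Lip (h : ℤ → ℤ → ℤ) : Prop :=
  ∀ x s x' s', |x - x'| ≤ 1 → |s - s'| ≤ 1 → |h x s - h x' s'| ≤ 1

theorem Lip.quad {h : ℤ → ℤ → ℤ} (hh : Lip h) (i j : ℤ) :
    Quad (h i j) (h (i + 1) j) (h i (j + 1)) (h (i + 1) (j + 1)) := by
  refine ⟨?_, ?_, ?_, ?_, ?_, ?_⟩ <;> apply hh <;> rw [abs_le] <;> omega

theorem Phi_eq {K : ℤ} (hK : 0 < K) {h : ℤ → ℤ → ℤ} (hh : Lip h) (i j t u : ℤ)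
    (ht : 0 ≤ t) (htK : t ≤ K) (hu : 0 ≤ u) (huK : u ≤ K) :
    Phi K h (K * i + t) (K * j + u) =
      phi K (h i j) (h (i + 1) j) (h i (j + 1)) (h (i + 1) (j + 1)) t u := by
  have base : ∀ i j t u : ℤ, 0 ≤ t → t < K → 0 ≤ u → u < K →
      Phi K h (K * i + t) (K * j + u) =
      phi K (h i j) (h (i + 1) j) (h i (j + 1)) (h (i + 1) (j + 1)) t u := by
    intro i j t u ht htK hu huK
    have e1 : (K * i + t) / K = i := by
      rw [Int.mul_add_ediv_left _ _ hK.ne', Int.ediv_eq_zero_of_lt ht htK, add_zero]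
    have e2 : (K * j + u) / K = j := by
      rw [Int.mul_add_ediv_left _ _ hK.ne', Int.ediv_eq_zero_of_lt hu huK, add_zero]
    have e3 : (K * i + t) % K = t := by
      rw [Int.mul_add_emod_self_left, Int.emod_eq_of_lt ht htK]
    have e4 : (K * j + u) % K = u := by
      rw [Int.mul_add_emod_self_left, Int.emod_eq_of_lt hu huK]
    simp only [Phi, e1, e2, e3, e4]
  have base2 : ∀ j u : ℤ, 0 ≤ u → u < K →
      Phi K h (K * i + t) (K * j + u) =
      phi K (h i j) (h (i + 1) j) (h i (j + 1)) (h (i + 1) (j + 1)) t u := by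
    intro j u hu huK
    rcases htK.lt_or_eq with h1 | h1
    · exact base i j t u ht h1 hu huK
    · rw [h1, show K * i + K = K * (i + 1) + 0 by ring, base _ _ _ _ le_rfl hK hu huK,
        phi_left (hh.quad _ _) hu huK.le, phi_right (hh.quad _ _) hu huK.le]
  rcases huK.lt_or_eq with h1 | h1
  · exact base2 j u hu h1
  · rw [h1, show K * j + K = K * (j + 1) + 0 by ring, base2 _ _ le_rfl hK,
        phi_bot (hh.quad _ _) ht htK, phi_top (hh.quad _ _) ht htK]

theorem common {K : ℤ} (hK : 0 < K) (x x' : ℤ) (h : |x - x'| ≤ 1) :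
    ∃ i t t', x = K * i + t ∧ x' = K * i + t' ∧ 0 ≤ t ∧ t ≤ K ∧ 0 ≤ t' ∧ t' ≤ K := by
  rw [abs_le] at h
  have a1 := Int.mul_ediv_add_emod (min x x') K
  have a2 := Int.emod_nonneg (min x x') hK.ne'
  have a3 := Int.emod_lt_of_pos (min x x') hK
  refine ⟨min x x' / K, x - K * (min x x' / K), x' - K * (min x x' / K), by ring, by ring, ?_⟩
  generalize K * (min x x' / K) = z at *
  omega

theorem Phi_lip {K : ℤ} (hK : 0 < K) {h : ℤ → ℤ → ℤ} (hh : Lip h) : Lip (Phi K h) := by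
  intro x s x' s' hx hs
  obtain ⟨i, t, t', rfl, rfl, h1, h2, h3, h4⟩ := common hK x x' hx
  obtain ⟨j, u, u', rfl, rfl, h5, h6, h7, h8⟩ := common hK s s' hs
  rw [Phi_eq hK hh _ _ _ _ h1 h2 h5 h6, Phi_eq hK hh _ _ _ _ h3 h4 h7 h8]
  exact phi_lip (hh.quad _ _) (by simpa using hx) (by simpa using hs)

theorem phi_round {k a b c d t u : ℤ} (h : Quad a b c d)
    (ht : 0 ≤ t) (htK : t ≤ 2 * k + 1) (hu : 0 ≤ u) (huK : u ≤ 2 * k + 1) :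
    (k + phi (2 * k + 1) a b c d t u) / (2 * k + 1) =
      if t ≤ k then (if u ≤ k then a else c) else (if u ≤ k then b else d) := by
  have hK : (0 : ℤ) < 2 * k + 1 := by omega
  have fin : ∀ y z : ℤ, |z - (2 * k + 1) * y| ≤ k → (k + z) / (2 * k + 1) = y := by
    intro y z hz
    rw [abs_le] at hz
    rw [show k + z = (2 * k + 1) * y + (k + z - (2 * k + 1) * y) by ring,
      Int.mul_add_ediv_left _ _ hK.ne', Int.ediv_eq_zero_of_lt (by omega) (by omega), add_zero]
  split_ifs with h1 h2 h2 <;> apply fin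
  · have := phi_lip (K := 2 * k + 1) (t := t) (u := u) (t' := 0) (u' := 0) (e := k) h
      (by rw [abs_le]; omega) (by rw [abs_le]; omega)
    rw [phi_bot h le_rfl hK.le] at this
    convert this using 2; ring
  · have := phi_lip (K := 2 * k + 1) (t := t) (u := u) (t' := 0) (u' := 2 * k + 1) (e := k) h
      (by rw [abs_le]; omega) (by rw [abs_le]; omega)
    rw [phi_top h le_rfl hK.le] at this
    convert this using 2; ring
  · have := phi_lip (K := 2 * k + 1) (t := t) (u := u) (t' := 2 * k + 1) (u' := 0) (e := k) h
      (by rw [abs_le]; omega) (by rw [abs_le]; omega)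
    rw [phi_bot h hK.le le_rfl] at this
    convert this using 2; ring
  · have := phi_lip (K := 2 * k + 1) (t := t) (u := u) (t' := 2 * k + 1) (u' := 2 * k + 1)
      (e := k) h (by rw [abs_le]; omega) (by rw [abs_le]; omega)
    rw [phi_top h hK.le le_rfl] at this
    convert this using 2; ring

/-- Projection to the interval `[0, M]`. -/
def clamp (M x : ℤ) : ℤ := max 0 (min x M)

theorem clamp_mem {M : ℤ} (hM : 1 ≤ M) (x : ℤ) : clamp M x ∈ Icc (0 : ℤ) M := by
  simp only [clamp, mem_Icc]; omega

theorem clamp_lip {M x x' : ℤ} (h : |x - x'| ≤ 1) : |clamp M x - clamp M x'| ≤ 1 := by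
  rw [abs_le] at *; unfold clamp; omega

theorem clamp_of_mem {M x : ℤ} (h0 : 0 ≤ x) (h : x ≤ M) : clamp M x = x := by
  unfold clamp; omega

theorem clamp_neg {M x : ℤ} (hM : 1 ≤ M) (h0 : x ≤ 0) : clamp M x = 0 := by
  unfold clamp; omega

theorem clamp_big {M x : ℤ} (hM : 1 ≤ M) (h0 : M ≤ x) : clamp M x = M := by
  unfold clamp; omega

/-- The cover of a path as a clamped interpolation. -/
theorem cover_eq {n : ℕ} {k M : ℤ} (hM : 1 ≤ M) (hk : 1 ≤ k) (α : ℤ → Fin n → ℤ) (j : ℤ)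
    (hj0 : 0 ≤ j) (hj : j ≤ (2 * k + 1) * M + 2 * k) (c : Fin n) :
    cover k M α j c = k + (α (clamp M ((j - k) / (2 * k + 1))) c *
        ((2 * k + 1) - (j - k) % (2 * k + 1)) +
      α (clamp M ((j - k) / (2 * k + 1) + 1)) c * ((j - k) % (2 * k + 1))) := by
  have hK : (0 : ℤ) < 2 * k + 1 := by omega
  unfold cover
  split_ifs with h1 h2
  · have e : (j - k) / (2 * k + 1) < 0 := Int.ediv_neg_of_neg_of_pos (by omega) hK
    rw [clamp_neg hM e.le, clamp_neg hM (by omega)]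
    simp only [barPt]; ring
  · have e : M ≤ (j - k) / (2 * k + 1) := by
      rw [Int.le_ediv_iff_mul_le hK, mul_comm]; omega
    rw [clamp_big hM e, clamp_big hM (by omega)]
    simp only [barPt]; ring
  · have e : (j - k) / (2 * k + 1) < M := by
      rw [Int.ediv_lt_iff_lt_mul hK, mul_comm]; omega
    have e' : 0 ≤ (j - k) / (2 * k + 1) := Int.ediv_nonneg (by omega) hK.le
    rw [clamp_of_mem e' e.le, clamp_of_mem (by omega) (by omega)]
    simp only [barPt, Int.fdiv_eq_ediv_of_nonneg _ hK.le]; ring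

/-- if `α, β : I_M → Y` have the same endpoints `y₀, y_M`, then their
standard covers have endpoints `ȳ₀, ȳ_M`, and if `α ≃ β` rel endpoints then
`α̂ ≃ β̂` rel endpoints (as maps `I_{(2k+1)M+2k} → S(Y, 2k+1)`). -/
theorem covers_homotopic_rel {n : ℕ} (Y : Set (Fin n → ℤ)) (hY : Y.Finite)
    (M k : ℤ) (hM : 1 ≤ M) (hk : 1 ≤ k)
    (α β : ℤ → Fin n → ℤ) (y₀ yM : Fin n → ℤ)
    (hαmaps : ∀ i ∈ Icc (0 : ℤ) M, α i ∈ Y)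
    (hαcont : ∀ i ∈ Icc (0 : ℤ) M, ∀ i' ∈ Icc (0 : ℤ) M, |i - i'| ≤ 1 → adj (α i) (α i'))
    (hβmaps : ∀ i ∈ Icc (0 : ℤ) M, β i ∈ Y)
    (hβcont : ∀ i ∈ Icc (0 : ℤ) M, ∀ i' ∈ Icc (0 : ℤ) M, |i - i'| ≤ 1 → adj (β i) (β i'))
    (hα0 : α 0 = y₀) (hβ0 : β 0 = y₀) (hαM : α M = yM) (hβM : β M = yM) :
    (cover k M α 0 = barPt k y₀ ∧ cover k M β 0 = barPt k y₀) ∧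
    (cover k M α ((2 * k + 1) * M + 2 * k) = barPt k yM ∧
      cover k M β ((2 * k + 1) * M + 2 * k) = barPt k yM) ∧
    (HomotopicRel M Y y₀ yM α β →
      HomotopicRel ((2 * k + 1) * M + 2 * k) (Subdiv Y (2 * k + 1))
        (barPt k y₀) (barPt k yM) (cover k M α) (cover k M β)) := by
  have hK : (0 : ℤ) < 2 * k + 1 := by omega
  have hKM : 0 < (2 * k + 1) * M := by positivity
  have c0 : ∀ γ : ℤ → Fin n → ℤ, cover k M γ 0 = barPt k (γ 0) := by
    intro γ; unfold cover; rw [if_pos (by omega)]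
  have cM : ∀ γ : ℤ → Fin n → ℤ,
      cover k M γ ((2 * k + 1) * M + 2 * k) = barPt k (γ M) := by
    intro γ; unfold cover; rw [if_neg (by omega), if_pos (by omega)]
  refine ⟨⟨by rw [c0, hα0], by rw [c0, hβ0]⟩, ⟨by rw [cM, hαM], by rw [cM, hβM]⟩, ?_⟩
  rintro ⟨N, hN, H, hmaps, hcont, hH0, hHN, hl, hr⟩
  let h : Fin n → ℤ → ℤ → ℤ := fun c x s => H (clamp M x) (clamp N s) c
  have hh : ∀ c, Lip (h c) := fun c x s x' s' hx hs =>
    hcont _ (clamp_mem hM x) _ (clamp_mem hN s) _ (clamp_mem hM x') _ (clamp_mem hN s')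
      (clamp_lip hx) (clamp_lip hs) c
  have hrow : ∀ j, 0 ≤ j → j ≤ (2 * k + 1) * M + 2 * k → ∀ T ∈ Icc (0 : ℤ) N,
      ∀ γ : ℤ → Fin n → ℤ, (∀ x ∈ Icc (0 : ℤ) M, H x T = γ x) →
      (fun c => k + Phi (2 * k + 1) (h c) (j - k) ((2 * k + 1) * T)) = cover k M γ j := by
    intro j hj0 hj T hT γ hγ
    funext c
    rw [cover_eq hM hk γ j hj0 hj]
    have e1 := Int.mul_ediv_add_emod (j - k) (2 * k + 1)
    have e2 := Int.emod_nonneg (j - k) hK.ne'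
    have e3 := Int.emod_lt_of_pos (j - k) hK
    have := Phi_eq hK (hh c) ((j - k) / (2 * k + 1)) T ((j - k) % (2 * k + 1)) 0 e2 e3.le
      le_rfl hK.le
    rw [e1, add_zero, phi_bot ((hh c).quad _ _) e2 e3.le] at this
    rw [this]
    simp only [h, clamp_of_mem hT.1 hT.2, hγ _ (clamp_mem hM _)]
  refine ⟨(2 * k + 1) * N, by nlinarith,
    fun j s c => k + Phi (2 * k + 1) (h c) (j - k) s, ?_, ?_, ?_, ?_, ?_, ?_⟩
  · intro j hj s hs
    show (fun c => (k + Phi (2 * k + 1) (h c) (j - k) s).fdiv (2 * k + 1)) ∈ Y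
    have e2 := Int.emod_nonneg (j - k) hK.ne'
    have e3 := Int.emod_lt_of_pos (j - k) hK
    have e5 := Int.emod_nonneg s hK.ne'
    have e6 := Int.emod_lt_of_pos s hK
    simp only [Int.fdiv_eq_ediv_of_nonneg _ hK.le, Phi]
    simp only [fun c => phi_round ((hh c).quad ((j - k) / (2 * k + 1)) (s / (2 * k + 1)))
      e2 e3.le e5 e6.le]
    split_ifs <;> exact hmaps _ (clamp_mem hM _) _ (clamp_mem hN _)
  · intro j hj s hs j' hj' s' hs' hjj hss c
    have := Phi_lip hK (hh c) (j - k) s (j' - k) s' (by simpa using hjj) hss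
    simpa using this
  · intro j hj
    have := hrow j hj.1 hj.2 0 ⟨le_rfl, by omega⟩ α hH0
    rwa [mul_zero] at this
  · intro j hj
    exact hrow j hj.1 hj.2 N ⟨by omega, le_rfl⟩ β hHN
  · intro s hs
    funext c
    have e : (0 - k) / (2 * k + 1) < 0 := Int.ediv_neg_of_neg_of_pos (by omega) hK
    simp only [Phi, h]
    rw [clamp_neg hM e.le, clamp_neg hM (by omega), hl _ (clamp_mem hN _),
      hl _ (clamp_mem hN _), phi_const]
    simp only [barPt]; ring
  · intro s hs
    funext c
    have e : M ≤ ((2 * k + 1) * M + 2 * k - k) / (2 * k + 1) := by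
      rw [Int.le_ediv_iff_mul_le hK, mul_comm]; omega
    simp only [Phi, h]
    rw [clamp_big hM e, clamp_big hM (by omega), hr _ (clamp_mem hN _),
      hr _ (clamp_mem hN _), phi_const]
    simp only [barPt]; ring
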